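/- arXiv:2202.05438 — 4 statements merged into one kernel-verified Lean document; each statement's English description precedes it below -/
import Mathlib

section
/- Let t : ℤ → ℝ be nonnegative and let n ≥ 1 be such that t(-n) > 0 and t(-j) = 0 for all j > n. Assume Σ_{i=0}^∞ t(i-n) = 1, and assume that the derivative of the function z ↦ (τ(z))^{1/n} is increasing on [0,1], where τ(z) = Σ_{i=0}^∞ t(i-n)·z^i. Then every positive solution of the fixed point equation x = Tx is bounded if and only if Σ_{i=0}^∞ i·t(i-n) < n. -/
/-- `x` is a positive solution of the fixed point equation `x = Tx` for the
infinite Toeplitz matrix with symbol `t : ℤ → ℝ`, acting by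
`(Tx)_j = Σ_{i=0}^∞ t(j-i)·x_i`. -/
def IsPosToeplitzSolution (t : ℤ → ℝ) (x : ℕ → ℝ) : Prop :=
  (∀ i, 0 ≤ x i) ∧ (∃ i, 0 < x i) ∧
    ∀ j : ℕ, HasSum (fun i : ℕ => t ((j : ℤ) - (i : ℤ)) * x i) (x j)

open Finset Filter Topology

/-- Reformulation of the equation with `a i = t (i - n)`. -/
lemma tz_eq_iff (t : ℤ → ℝ) (n : ℕ) (hzero : ∀ j : ℤ, (n : ℤ) < j → t (-j) = 0)
    (x : ℕ → ℝ) (j : ℕ) :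
    HasSum (fun i : ℕ => t ((j : ℤ) - (i : ℤ)) * x i) (x j) ↔
      x j = ∑ i ∈ range (j + n + 1), t (((j + n - i : ℕ) : ℤ) - n) * x i := by
  have h1 : HasSum (fun i : ℕ => t ((j : ℤ) - (i : ℤ)) * x i)
      (∑ i ∈ range (j + n + 1), t ((j : ℤ) - (i : ℤ)) * x i) := by
    apply hasSum_sum_of_ne_finset_zero
    intro i hi
    simp only [mem_range, not_lt] at hi
    have := hzero ((i : ℤ) - j) (by omega)
    rw [neg_sub] at this
    rw [this, zero_mul]
  have h2 : ∑ i ∈ range (j + n + 1), t (((j + n - i : ℕ) : ℤ) - n) * x i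
      = ∑ i ∈ range (j + n + 1), t ((j : ℤ) - (i : ℤ)) * x i := by
    apply sum_congr rfl
    intro i hi
    simp only [mem_range] at hi
    congr 2
    omega
  rw [h2]
  constructor
  · intro h; exact h.unique h1
  · intro h; rw [h]; exact h1

/-- Partial sums of a convolution. -/
lemma tz_conv_sum (a x : ℕ → ℝ) (M : ℕ) :
    ∑ k ∈ range M, ∑ i ∈ range (k + 1), a (k - i) * x i
      = ∑ i ∈ range M, x i * ∑ l ∈ range (M - i), a l := by
  induction M with
  | zero => simp
  | succ M ih =>
    rw [sum_range_succ, ih]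
    have h0 : ∑ i ∈ range M, x i * ∑ l ∈ range (M - i), a l
        = ∑ i ∈ range (M + 1), x i * ∑ l ∈ range (M - i), a l := by
      rw [sum_range_succ]; simp
    rw [h0, ← sum_add_distrib]
    apply sum_congr rfl
    intro i hi
    simp only [mem_range] at hi
    rw [show M + 1 - i = (M - i) + 1 by omega, sum_range_succ]
    ring

/-- tails -/
def tzB (a : ℕ → ℝ) (m : ℕ) : ℝ := 1 - ∑ l ∈ range m, a l

/-- the sum of tails `b 1 + ... + b M` -/
def tzS (a : ℕ → ℝ) (M : ℕ) : ℝ := ∑ m ∈ range M, tzB a (m + 1)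

lemma tzB_nonneg (a : ℕ → ℝ) (ha : ∀ i, 0 ≤ a i) (hone : HasSum a 1) (m : ℕ) :
    0 ≤ tzB a m := by
  unfold tzB
  have := sum_le_hasSum (range m) (fun i _ => ha i) hone
  linarith

lemma tzS_eq (a : ℕ → ℝ) (M : ℕ) :
    tzS a M = M * tzB a M + ∑ l ∈ range M, (l : ℝ) * a l := by
  induction M with
  | zero => simp [tzS]
  | succ M ih =>
    unfold tzS at *
    rw [sum_range_succ, ih, sum_range_succ _ M]
    simp only [tzB, sum_range_succ]
    push_cast
    ring

lemma tzS_le (a : ℕ → ℝ) (ha : ∀ i, 0 ≤ a i) (hone : HasSum a 1)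
    (hs : Summable fun i : ℕ => (i : ℝ) * a i) (M : ℕ) :
    tzS a M ≤ ∑' i : ℕ, (i : ℝ) * a i := by
  rw [tzS_eq, ← hs.sum_add_tsum_nat_add M]
  have h1 : tzB a M = ∑' i : ℕ, a (i + M) := by
    unfold tzB
    rw [← hone.tsum_eq, ← hone.summable.sum_add_tsum_nat_add M]
    ring
  rw [h1, ← tsum_mul_left]
  have : ∑' i : ℕ, (M : ℝ) * a (i + M) ≤ ∑' i : ℕ, ((i + M : ℕ) : ℝ) * a (i + M) := by
    apply Summable.tsum_le_tsum
    · intro i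
      apply mul_le_mul_of_nonneg_right _ (ha _)
      push_cast
      have : (0 : ℝ) ≤ i := Nat.cast_nonneg i
      linarith
    · exact ((summable_nat_add_iff M).2 hone.summable).mul_left _
    · exact (summable_nat_add_iff (f := fun i : ℕ => (i : ℝ) * a i) M).2 hs
  linarith

lemma tzS_unbdd (a : ℕ → ℝ) (ha : ∀ i, 0 ≤ a i) (hone : HasSum a 1) (n : ℕ)
    (h : ¬ (Summable (fun i : ℕ => (i : ℝ) * a i) ∧ ∑' i : ℕ, (i : ℝ) * a i < (n : ℝ)))
    (ε : ℝ) (hε : 0 < ε) : ∃ M, (n : ℝ) - ε < tzS a M := by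
  by_contra! hc
  apply h
  have h1 : ∀ M, ∑ l ∈ range M, (l : ℝ) * a l ≤ n - ε := by
    intro M
    have := hc M
    rw [tzS_eq] at this
    have h2 := mul_nonneg (Nat.cast_nonneg (α := ℝ) M) (tzB_nonneg a ha hone M)
    linarith
  have h0 : ∀ i : ℕ, 0 ≤ (i : ℝ) * a i := fun i => mul_nonneg (Nat.cast_nonneg _) (ha i)
  refine ⟨summable_of_sum_range_le h0 h1, ?_⟩
  have := Real.tsum_le_of_sum_range_le h0 h1
  linarith

lemma tzS_mono (a : ℕ → ℝ) (ha : ∀ i, 0 ≤ a i) (hone : HasSum a 1) : Monotone (tzS a) := by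
  apply monotone_nat_of_le_succ
  intro M
  unfold tzS
  rw [sum_range_succ]
  have := tzB_nonneg a ha hone (M + 1)
  linarith

/-- the key identity -/
lemma tz_key (a x : ℕ → ℝ) (n : ℕ)
    (hx : ∀ j, x j = ∑ i ∈ range (j + n + 1), a (j + n - i) * x i) (N : ℕ) :
    ∑ k ∈ range n, x (N + k) * (1 - tzB a (n - k))
      = (∑ k ∈ range n, ∑ i ∈ range (k + 1), a (k - i) * x i)
        + ∑ i ∈ range N, x i * tzB a (N + n - i) := by
  have h := tz_conv_sum a x (n + N)
  rw [sum_range_add, add_comm n N, sum_range_add] at h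
  have h1 : ∑ j ∈ range N, ∑ i ∈ range (n + j + 1), a (n + j - i) * x i
      = ∑ j ∈ range N, x j := by
    apply sum_congr rfl
    intro j _
    rw [hx j, add_comm n j]
  rw [h1] at h
  have h2 : ∑ k ∈ range n, x (N + k) * (1 - tzB a (n - k))
      = ∑ k ∈ range n, x (N + k) * ∑ l ∈ range (N + n - (N + k)), a l := by
    apply sum_congr rfl
    intro k _
    unfold tzB
    rw [show N + n - (N + k) = n - k by omega]
    ring
  have h3 : ∑ i ∈ range N, x i * tzB a (N + n - i)
      = ∑ j ∈ range N, x j - ∑ i ∈ range N, x i * ∑ l ∈ range (N + n - i), a l := by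
    rw [← sum_sub_distrib]
    apply sum_congr rfl
    intro i _
    unfold tzB
    ring
  rw [h2, h3]
  linarith

lemma tz_alpha (a : ℕ → ℝ) (n : ℕ) :
    ∑ k ∈ range n, (1 - tzB a (n - k)) = n - tzS a n := by
  rw [sum_sub_distrib]
  simp only [sum_const, card_range, nsmul_eq_mul, mul_one, tzS]
  rw [← sum_range_reflect]
  congr 1
  apply sum_congr rfl
  intro i hi
  simp only [mem_range] at hi
  congr 1
  omega

lemma tz_beta (a : ℕ → ℝ) (n N : ℕ) :
    ∑ i ∈ range N, tzB a (N + n - i) = tzS a (n + N) - tzS a n := by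
  unfold tzS
  rw [sum_range_add, ← sum_range_reflect, add_sub_cancel_left]
  apply sum_congr rfl
  intro i hi
  simp only [mem_range] at hi
  congr 1
  omega

/-- double summation -/
lemma tz_double (a x : ℕ → ℝ) (n L : ℕ) :
    ∑ N ∈ range L, ∑ i ∈ range N, x i * tzB a (N + n - i)
      = ∑ i ∈ range L, x i * (tzS a (L - 1 - i + n) - tzS a n) := by
  induction L with
  | zero => simp
  | succ L ih =>
    rw [sum_range_succ, ih, sum_range_succ _ L, ← sum_add_distrib]
    simp only [add_tsub_cancel_right, tsub_self, zero_add, sub_self, mul_zero, add_zero]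
    apply sum_congr rfl
    intro i hi
    simp only [mem_range] at hi
    rw [← mul_add]
    congr 1
    rw [show L - i + n = (L - 1 - i + n) + 1 by omega]
    rw [show L + n - i = (L - 1 - i + n) + 1 by omega]
    simp only [tzS, sum_range_succ]
    ring

/-- Bounded solutions cannot exist when the drift is nonpositive. -/
lemma tz_not_bdd (a x : ℕ → ℝ) (n : ℕ) (ha : ∀ i, 0 ≤ a i) (hone : HasSum a 1)
    (hx0 : ∀ i, 0 ≤ x i)
    (hx : ∀ j, x j = ∑ i ∈ range (j + n + 1), a (j + n - i) * x i)
    (hP : 0 < ∑ k ∈ range n, ∑ i ∈ range (k + 1), a (k - i) * x i)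
    (hS : ∀ ε : ℝ, 0 < ε → ∃ M, (n : ℝ) - ε < tzS a M)
    (C : ℝ) (hC : ∀ i, x i ≤ C) : False := by
  set P := ∑ k ∈ range n, ∑ i ∈ range (k + 1), a (k - i) * x i with hPdef
  have hC0 : 0 ≤ C := (hx0 0).trans (hC 0)
  have hA0 : ∀ m, 0 ≤ 1 - tzB a m := by
    intro m; simp only [tzB, sub_sub_cancel]; exact sum_nonneg fun i _ => ha i
  have hA1 : ∀ m, 1 - tzB a m ≤ 1 := by
    intro m; have := tzB_nonneg a ha hone m; linarith
  have hS0 : ∀ m, 0 ≤ tzS a m := fun m => sum_nonneg fun i _ => tzB_nonneg a ha hone _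
  -- main inequality
  have main : ∀ L : ℕ, P * L ≤ n * (n * C) +
      ∑ i ∈ range L, x i * (n - tzS a (L - 1 - i + n)) := by
    intro L
    have h1 : ∑ N ∈ range L, ∑ k ∈ range n, x (N + k) * (1 - tzB a (n - k))
        = P * L + ∑ i ∈ range L, x i * (tzS a (L - 1 - i + n) - tzS a n) := by
      rw [sum_congr rfl (fun N _ => tz_key a x n hx N), sum_add_distrib, tz_double]
      rw [sum_const, card_range, nsmul_eq_mul, mul_comm]
    have h2 : ∑ N ∈ range L, ∑ k ∈ range n, x (N + k) * (1 - tzB a (n - k))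
        ≤ (n - tzS a n) * (∑ i ∈ range L, x i) + n * (n * C) := by
      rw [sum_comm, ← tz_alpha, sum_mul]
      have : (n : ℝ) * (n * C) = ∑ k ∈ range n, (n * C) := by simp
      rw [this, ← sum_add_distrib]
      apply sum_le_sum
      intro k hk
      simp only [mem_range] at hk
      rw [← sum_mul, mul_comm]
      have h3 : ∑ N ∈ range L, x (N + k) ≤ ∑ i ∈ range L, x i + n * C := by
        have e1 := sum_range_add x L k
        have e2 := sum_range_add x k L
        have e3 : ∑ N ∈ range L, x (N + k) = ∑ N ∈ range L, x (k + N) := by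
          simp only [add_comm]
        have e4 : ∑ i ∈ range k, x (L + i) ≤ k * C := by
          have := sum_le_sum (s := range k) (fun i _ => hC (L + i))
          simpa using this
        have e5 : 0 ≤ ∑ i ∈ range k, x i := sum_nonneg fun i _ => hx0 i
        have e6 : (k : ℝ) * C ≤ n * C := by
          apply mul_le_mul_of_nonneg_right _ hC0
          exact_mod_cast hk.le
        rw [add_comm k L] at e2
        linarith
      have h4 := mul_le_mul_of_nonneg_left h3 (hA0 (n - k))
      have h5 : (1 - tzB a (n - k)) * (n * C) ≤ 1 * (n * C) :=
        mul_le_mul_of_nonneg_right (hA1 _) (by positivity)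
      linarith
    have h6 : ∑ i ∈ range L, x i * (n - tzS a (L - 1 - i + n))
        = (n - tzS a n) * (∑ i ∈ range L, x i)
          - ∑ i ∈ range L, x i * (tzS a (L - 1 - i + n) - tzS a n) := by
      rw [mul_sum, ← sum_sub_distrib]
      apply sum_congr rfl
      intro i _
      ring
    linarith
  set ε := P / (2 * (C + 1)) with hε
  have hεpos : 0 < ε := by positivity
  obtain ⟨M, hM⟩ := hS ε hεpos
  have main2 : ∀ L : ℕ, ∑ i ∈ range L, x i * (n - tzS a (L - 1 - i + n))
      ≤ C * ε * L + M * (C * n) := by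
    intro L
    have h1 : ∑ i ∈ range L, x i * (n - tzS a (L - 1 - i + n))
        = ∑ i ∈ range L, x (L - 1 - i) * (n - tzS a (i + n)) := by
      rw [← sum_range_reflect]
      apply sum_congr rfl
      intro i hi
      simp only [mem_range] at hi
      rw [show L - 1 - (L - 1 - i) = i by omega]
    rw [h1]
    have h2 : ∀ i ∈ range L, x (L - 1 - i) * (n - tzS a (i + n))
        ≤ C * ε + (if i < M then C * n else 0) := by
      intro i _
      split_ifs with hi
      · have : x (L - 1 - i) * (n - tzS a (i + n)) ≤ C * n := by
          calc x (L - 1 - i) * (n - tzS a (i + n)) ≤ x (L - 1 - i) * n := by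
                apply mul_le_mul_of_nonneg_left _ (hx0 _)
                linarith [hS0 (i + n)]
            _ ≤ C * n := mul_le_mul_of_nonneg_right (hC _) (Nat.cast_nonneg _)
        have : 0 ≤ C * ε := by positivity
        linarith
      · have := tzS_mono a ha hone (show M ≤ i + n by omega)
        calc x (L - 1 - i) * (n - tzS a (i + n)) ≤ x (L - 1 - i) * ε := by
                apply mul_le_mul_of_nonneg_left _ (hx0 _)
                linarith
          _ ≤ C * ε + 0 := by
                rw [add_zero]; exact mul_le_mul_of_nonneg_right (hC _) hεpos.le
    refine (sum_le_sum h2).trans ?_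
    rw [sum_add_distrib]
    have h3 : ∑ i ∈ range L, (if i < M then C * (n : ℝ) else 0) ≤ M * (C * n) := by
      rw [← sum_filter, sum_const, nsmul_eq_mul]
      apply mul_le_mul_of_nonneg_right _ (by positivity)
      have : (filter (fun i => i < M) (range L)).card ≤ (range M).card :=
        card_le_card (by intro i; simp)
      rw [card_range] at this
      exact_mod_cast this
    have h4 : ∑ i ∈ range L, C * ε = C * ε * L := by simp [mul_comm]
    linarith
  have hCε : C * ε ≤ P / 2 := by
    rw [hε]
    rw [mul_div_assoc', div_le_div_iff₀ (by positivity) (by positivity)]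
    nlinarith
  obtain ⟨L, hL⟩ := exists_nat_gt ((n * (n * C) + M * (C * n)) / (P / 2))
  rw [div_lt_iff₀ (by positivity)] at hL
  have h1 := main L
  have h2 := main2 L
  have h3 : C * ε * L ≤ P / 2 * L := mul_le_mul_of_nonneg_right hCε (Nat.cast_nonneg _)
  linarith

/-- Positive drift: all nonnegative solutions are bounded. -/
lemma tz_bdd (a x : ℕ → ℝ) (n : ℕ) (ha : ∀ i, 0 ≤ a i) (hone : HasSum a 1)
    (hx0 : ∀ i, 0 ≤ x i)
    (hx : ∀ j, x j = ∑ i ∈ range (j + n + 1), a (j + n - i) * x i)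
    (ε : ℝ) (hε : 0 < ε) (hS : ∀ M, tzS a M ≤ n - ε) :
    ∃ C : ℝ, ∀ i, x i ≤ C := by
  set P := ∑ k ∈ range n, ∑ i ∈ range (k + 1), a (k - i) * x i with hPdef
  have hP0 : 0 ≤ P := sum_nonneg fun k _ => sum_nonneg fun i _ => mul_nonneg (ha _) (hx0 _)
  have hA0 : ∀ m, 0 ≤ 1 - tzB a m := by
    intro m; simp only [tzB, sub_sub_cancel]; exact sum_nonneg fun i _ => ha i
  -- choice of ρ
  obtain ⟨ρ, hρ0, hρ1, hρ⟩ : ∃ ρ : ℝ, 0 < ρ ∧ ρ < 1 ∧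
      (n - tzS a n) - ε / 2 ≤ ρ ^ n * (n - tzS a n) := by
    have hc : ContinuousAt (fun ρ : ℝ => ρ ^ n * (n - tzS a n)) 1 := by fun_prop
    have h1 : ∀ᶠ ρ in 𝓝[<] (1 : ℝ), (n - tzS a n) - ε / 2 < ρ ^ n * (n - tzS a n) := by
      apply (hc.tendsto.mono_left nhdsWithin_le_nhds).eventually_const_lt
      simp; linarith
    have h2 : ∀ᶠ ρ in 𝓝[<] (1 : ℝ), (0 : ℝ) < ρ :=
      nhdsWithin_le_nhds (lt_mem_nhds one_pos)
    obtain ⟨ρ, h⟩ := (h1.and (h2.and self_mem_nhdsWithin)).exists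
    exact ⟨ρ, h.2.1, h.2.2, h.1.le⟩
  -- U
  let U : ℕ → ℝ := fun m => Nat.rec (x 0) (fun k u => ρ * u + x (k + 1)) m
  have hU0 : U 0 = x 0 := rfl
  have hUs : ∀ m, U (m + 1) = ρ * U m + x (m + 1) := fun m => rfl
  have hUn : ∀ m, 0 ≤ U m := by
    intro m
    induction m with
    | zero => exact hx0 0
    | succ m ih => rw [hUs]; have := hx0 (m + 1); positivity
  have hUx : ∀ m, x m ≤ U m := by
    intro m
    cases m with
    | zero => exact le_rfl
    | succ m => rw [hUs]; have := hUn m; have : 0 ≤ ρ * U m := by positivity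
                linarith
  have hUk : ∀ m k, ρ ^ k * U m ≤ U (m + k) := by
    intro m k
    induction k with
    | zero => simp
    | succ k ih =>
      rw [← add_assoc, hUs, pow_succ']
      have := hx0 (m + k + 1)
      have := mul_le_mul_of_nonneg_left ih hρ0.le
      linarith
  let G : ℕ → ℝ := fun N => ∑ k ∈ range n, U (N + k) * (1 - tzB a (n - k))
      - ∑ i ∈ range N, U i * tzB a (N + n - i)
  have hG : ∀ N, G (N + 1) = ρ * G N + P := by
    intro N
    have key := tz_key a x n hx (N + 1)
    have e1 : ∑ k ∈ range n, U (N + 1 + k) * (1 - tzB a (n - k))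
        = ρ * ∑ k ∈ range n, U (N + k) * (1 - tzB a (n - k))
          + ∑ k ∈ range n, x (N + 1 + k) * (1 - tzB a (n - k)) := by
      rw [mul_sum, ← sum_add_distrib]
      apply sum_congr rfl
      intro k _
      rw [show N + 1 + k = N + k + 1 by omega, hUs]
      ring
    have e2 : ∑ i ∈ range (N + 1), U i * tzB a (N + 1 + n - i)
        = ρ * ∑ i ∈ range N, U i * tzB a (N + n - i)
          + ∑ i ∈ range (N + 1), x i * tzB a (N + 1 + n - i) := by
      rw [sum_range_succ', sum_range_succ' (fun i => x i * _), mul_sum, ← add_assoc,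
        ← sum_add_distrib]
      congr 1
      apply sum_congr rfl
      intro i _
      rw [show N + 1 + n - (i + 1) = N + n - i by omega, hUs]
      ring
    simp only [G]
    rw [e1, e2]
    linarith
  set Q := max (G 0) (P / (1 - ρ)) with hQ
  have hPQ : P ≤ (1 - ρ) * Q := by
    have := le_max_right (G 0) (P / (1 - ρ))
    rw [div_le_iff₀ (by linarith)] at this
    linarith
  have hGQ : ∀ N, G N ≤ Q := by
    intro N
    induction N with
    | zero => exact le_max_left _ _
    | succ N ih =>
      rw [hG]
      have := mul_le_mul_of_nonneg_left ih hρ0.le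
      linarith
  have hQ0 : 0 ≤ Q := le_max_of_le_right (div_nonneg hP0 (by linarith))
  set K := Q / (ε / 2) with hK
  have hKQ : K * (ε / 2) = Q := by rw [hK]; field_simp
  have hK0 : 0 ≤ K := by positivity
  have hα : ε ≤ n - tzS a n := by have := hS n; linarith
  have hUK : ∀ N, U N ≤ K := by
    intro N
    induction N using Nat.strong_induction_on with
    | _ N ih =>
      have h1 : ρ ^ n * (n - tzS a n) * U N ≤ ∑ k ∈ range n, U (N + k) * (1 - tzB a (n - k)) := by
        rw [← tz_alpha, mul_sum, sum_mul]
        apply sum_le_sum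
        intro k hk
        simp only [mem_range] at hk
        have h2 := hUk N k
        have h3 : ρ ^ n * U N ≤ ρ ^ k * U N :=
          mul_le_mul_of_nonneg_right (pow_le_pow_of_le_one hρ0.le hρ1.le hk.le) (hUn N)
        have := mul_le_mul_of_nonneg_right (h3.trans h2) (hA0 (n - k))
        linarith
      have h2 : ∑ i ∈ range N, U i * tzB a (N + n - i) ≤ K * (n - ε - tzS a n) := by
        calc ∑ i ∈ range N, U i * tzB a (N + n - i)
            ≤ ∑ i ∈ range N, K * tzB a (N + n - i) := by
              apply sum_le_sum
              intro i hi
              exact mul_le_mul_of_nonneg_right (ih i (mem_range.1 hi)) (tzB_nonneg a ha hone _)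
          _ = K * (tzS a (n + N) - tzS a n) := by rw [← mul_sum, tz_beta]
          _ ≤ _ := by
              apply mul_le_mul_of_nonneg_left _ hK0
              linarith [hS (n + N)]
      have h3 := hGQ N
      simp only [G] at h3
      have h4 := mul_le_mul_of_nonneg_right hρ (hUn N)
      have h5 : ((n - tzS a n) - ε / 2) * U N ≤ ((n - tzS a n) - ε / 2) * K := by
        nlinarith
      exact le_of_mul_le_mul_left h5 (by linarith)
  exact ⟨K, fun i => (hUx i).trans (hUK i)⟩

/-- harmonic functions on the interval `{0..N}` -/
lemma tz_finite (a : ℕ → ℝ) (n : ℕ) (ha : ∀ i, 0 ≤ a i) (hone : HasSum a 1) (N : ℕ) :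
    ∃ h : ℕ → ℝ, (∀ j, 0 ≤ h j) ∧ (∀ j, N < j → h j = 1) ∧
      ∀ j, j ≤ N → h j = ∑ i ∈ range (j + n + 1), a (j + n - i) * h i := by
  have hle : ∀ j, ∑ i ∈ range (j + n + 1), a (j + n - i) ≤ 1 := by
    intro j
    have := sum_range_reflect a (j + n + 1)
    simp only [add_tsub_cancel_right] at this
    rw [this]
    exact sum_le_hasSum _ (fun i _ => ha i) hone
  let Φ : (ℕ → Set.Icc (0 : ℝ) 1) →o (ℕ → Set.Icc (0 : ℝ) 1) :=
    { toFun := fun f j => ⟨if j ≤ N then ∑ i ∈ range (j + n + 1), a (j + n - i) * (f i : ℝ) else 1, by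
        split_ifs
        · refine ⟨sum_nonneg fun i _ => mul_nonneg (ha _) (f i).2.1, le_trans ?_ (hle j)⟩
          apply sum_le_sum
          intro i _
          exact mul_le_of_le_one_right (ha _) (f i).2.2
        · simp⟩
      monotone' := by
        intro f g hfg j
        show (_ : ℝ) ≤ _
        dsimp only
        split_ifs
        · apply sum_le_sum
          intro i _
          exact mul_le_mul_of_nonneg_left (hfg i) (ha _)
        · exact le_rfl }
  have hfix : Φ (OrderHom.lfp Φ) = OrderHom.lfp Φ := OrderHom.map_lfp Φ
  have hfix' : ∀ j, ((OrderHom.lfp Φ j : Set.Icc (0 : ℝ) 1) : ℝ) = if j ≤ N then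
      ∑ i ∈ range (j + n + 1), a (j + n - i) * ((OrderHom.lfp Φ i : Set.Icc (0 : ℝ) 1) : ℝ) else 1 := by
    intro j
    conv_lhs => rw [← hfix]
    rfl
  refine ⟨fun j => (OrderHom.lfp Φ j : Set.Icc (0 : ℝ) 1), fun j => (OrderHom.lfp Φ j).2.1, ?_, ?_⟩
  · intro j hj
    dsimp only
    rw [hfix', if_neg (by omega)]
  · intro j hj
    dsimp only
    rw [hfix', if_pos hj]

/-- normalised version with bounds -/
lemma tz_finite' (a : ℕ → ℝ) (n : ℕ) (hn : 1 ≤ n) (ha : ∀ i, 0 ≤ a i) (ha0 : 0 < a 0)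
    (hone : HasSum a 1) (N : ℕ) :
    ∃ h : ℕ → ℝ, (∀ j, j ≤ N → h j ∈ Set.Icc 0 ((a 0)⁻¹ ^ j)) ∧ (∀ j, 0 ≤ h j) ∧
      (n ≤ N → ∑ r ∈ range n, h r = 1) ∧
      ∀ j, j ≤ N → h j = ∑ i ∈ range (j + n + 1), a (j + n - i) * h i := by
  obtain ⟨h, h0, h1, h2⟩ := tz_finite a n ha hone N
  have hstep : ∀ j, j ≤ N → a 0 * h (j + n) ≤ h j := by
    intro j hj
    rw [h2 j hj]
    have := single_le_sum (s := range (j + n + 1)) (f := fun i => a (j + n - i) * h i)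
      (fun i _ => mul_nonneg (ha _) (h0 i)) (mem_range.2 (Nat.lt_succ_self (j + n)))
    simpa using this
  have hpos : ∀ k j, N < j + k → 0 < h j := by
    intro k
    induction k with
    | zero => intro j hj; rw [h1 j (by omega)]; exact one_pos
    | succ k ih =>
      intro j hj
      by_cases hjN : j ≤ N
      · exact lt_of_lt_of_le (mul_pos ha0 (ih (j + n) (by omega))) (hstep j hjN)
      · rw [h1 j (by omega)]; exact one_pos
  have hpos' : ∀ j, 0 < h j := fun j => hpos (N + 1) j (by omega)
  set s := ∑ r ∈ range n, h r with hs
  have hspos : 0 < s := sum_pos (fun r _ => hpos' r) ⟨0, mem_range.2 hn⟩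
  have ha1 : a 0 ≤ 1 := by
    have := sum_le_hasSum (range 1) (fun i _ => ha i) hone
    simpa using this
  have hinv : 1 ≤ (a 0)⁻¹ := (one_le_inv₀ ha0).2 ha1
  have hb : ∀ j, j ≤ N → h j ≤ (a 0)⁻¹ ^ j * s := by
    intro j
    induction j using Nat.strong_induction_on with
    | _ j ih =>
      intro hj
      by_cases hjn : j < n
      · have e1 : h j ≤ s := single_le_sum (f := h) (fun i _ => h0 i) (mem_range.2 hjn)
        have e2 : 1 ≤ (a 0)⁻¹ ^ j := one_le_pow₀ hinv
        nlinarith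
      · obtain ⟨m, rfl⟩ : ∃ m, j = m + n := ⟨j - n, by omega⟩
        have e1 := ih m (by omega) (by omega)
        have e2 := hstep m (by omega)
        have e3 : h (m + n) ≤ (a 0)⁻¹ * h m := by
          rw [inv_mul_eq_div, le_div_iff₀ ha0]; linarith
        have e4 : (a 0)⁻¹ ^ (m + 1) ≤ (a 0)⁻¹ ^ (m + n) := pow_le_pow_right₀ hinv (by omega)
        calc h (m + n) ≤ (a 0)⁻¹ * ((a 0)⁻¹ ^ m * s) :=
              e3.trans (mul_le_mul_of_nonneg_left e1 (by positivity))
          _ = (a 0)⁻¹ ^ (m + 1) * s := by ring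
          _ ≤ _ := mul_le_mul_of_nonneg_right e4 hspos.le
  refine ⟨fun j => h j / s, ?_, ?_, ?_, ?_⟩
  · intro j hj
    exact ⟨div_nonneg (h0 j) hspos.le, (div_le_iff₀ hspos).2 (hb j hj)⟩
  · intro j
    exact div_nonneg (h0 j) hspos.le
  · intro _
    rw [← sum_div]
    exact div_self hspos.ne'
  · intro j hj
    dsimp only
    rw [h2 j hj, sum_div]
    apply sum_congr rfl
    intro i _
    ring

/-- existence of a positive solution -/
lemma tz_exists (a : ℕ → ℝ) (n : ℕ) (hn : 1 ≤ n) (ha : ∀ i, 0 ≤ a i) (ha0 : 0 < a 0)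
    (hone : HasSum a 1) :
    ∃ x : ℕ → ℝ, (∀ j, 0 ≤ x j) ∧ (∑ r ∈ range n, x r = 1) ∧
      ∀ j, x j = ∑ i ∈ range (j + n + 1), a (j + n - i) * x i := by
  choose h hb h0 hs he using tz_finite' a n hn ha ha0 hone
  let u : Ultrafilter ℕ := hyperfilter ℕ
  have hu : ∀ m, ∀ᶠ N in (u : Filter ℕ), m ≤ N := by
    intro m
    have : (u : Filter ℕ) ≤ atTop := by
      rw [← Nat.cofinite_eq_atTop]; exact hyperfilter_le_cofinite
    exact this (eventually_ge_atTop m)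
  have hlim : ∀ j, ∃ y, Tendsto (fun N => h N j) u (𝓝 y) := by
    intro j
    have hc : IsCompact (Set.Icc (0 : ℝ) ((a 0)⁻¹ ^ j)) := isCompact_Icc
    have := hc.ultrafilter_le_nhds (u.map (fun N => h N j)) (by
      rw [Filter.le_principal_iff]
      exact (hu j).mono (fun N hN => hb N j hN))
    obtain ⟨y, -, hy⟩ := this
    exact ⟨y, hy⟩
  choose x hx using hlim
  refine ⟨x, fun j => ge_of_tendsto' (hx j) (fun N => h0 N j), ?_, ?_⟩
  · have h1 : Tendsto (fun N => ∑ r ∈ range n, h N r) u (𝓝 (∑ r ∈ range n, x r)) :=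
      tendsto_finsetSum _ (fun r _ => hx r)
    have h2 : Tendsto (fun N => ∑ r ∈ range n, h N r) u (𝓝 1) :=
      tendsto_const_nhds.congr' ((hu n).mono fun N hN => (hs N hN).symm)
    exact tendsto_nhds_unique h1 h2
  · intro j
    have h1 : Tendsto (fun N => ∑ i ∈ range (j + n + 1), a (j + n - i) * h N i) u
        (𝓝 (∑ i ∈ range (j + n + 1), a (j + n - i) * x i)) :=
      tendsto_finsetSum _ (fun r _ => (hx r).const_mul _)
    have h2 := (hx j).congr' ((hu j).mono fun N hN => he N j hN)
    exact tendsto_nhds_unique h2 h1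

/-- Theorem 1.1(ii): if `Σ_{i=0}^∞ t(i-n) = 1` and the derivative of
`z ↦ (τ(z))^{1/n}` is increasing on `[0,1]`, then every positive solution of
`x = Tx` is bounded if and only if `Σ_{i=0}^∞ i·t(i-n) < n`. -/
theorem toeplitz_sum_eq_one_bounded_iff
    (t : ℤ → ℝ) (ht : ∀ i : ℤ, 0 ≤ t i)
    (n : ℕ) (hn : 1 ≤ n) (htn : 0 < t (-(n : ℤ)))
    (hzero : ∀ j : ℤ, (n : ℤ) < j → t (-j) = 0)
    (hone : HasSum (fun i : ℕ => t ((i : ℤ) - (n : ℤ))) 1)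
    (hderiv : MonotoneOn
      (deriv fun z : ℝ => (∑' i : ℕ, t ((i : ℤ) - (n : ℤ)) * z ^ i) ^ (1 / (n : ℝ)))
      (Set.Icc (0 : ℝ) 1)) :
    (∀ x : ℕ → ℝ, IsPosToeplitzSolution t x → ∃ C : ℝ, ∀ i, x i ≤ C) ↔
      (Summable (fun i : ℕ => (i : ℝ) * t ((i : ℤ) - (n : ℤ))) ∧
        ∑' i : ℕ, (i : ℝ) * t ((i : ℤ) - (n : ℤ)) < (n : ℝ)) := by
  have ha : ∀ i : ℕ, 0 ≤ t ((i : ℤ) - (n : ℤ)) := fun i => ht _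
  have hap : 0 < t (((0 : ℕ) : ℤ) - (n : ℤ)) := by simpa using htn
  constructor
  · intro hall
    by_contra hcon
    have hS := tzS_unbdd (fun i : ℕ => t ((i : ℤ) - (n : ℤ))) ha hone n hcon
    obtain ⟨x, hx0, hx1, hx⟩ :=
      tz_exists (fun i : ℕ => t ((i : ℤ) - (n : ℤ))) n hn ha hap hone
    have hsol : IsPosToeplitzSolution t x := by
      refine ⟨hx0, ?_, fun j => (tz_eq_iff t n hzero x j).2 (hx j)⟩
      by_contra! hc
      have : ∑ r ∈ range n, x r ≤ 0 := sum_nonpos fun r _ => hc r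
      linarith
    obtain ⟨C, hC⟩ := hall x hsol
    refine tz_not_bdd (fun i : ℕ => t ((i : ℤ) - (n : ℤ))) x n ha hone hx0 hx ?_ hS C hC
    have h1 : t (((0 : ℕ) : ℤ) - (n : ℤ)) * ∑ r ∈ range n, x r ≤
        ∑ k ∈ range n, ∑ i ∈ range (k + 1), t (((k - i : ℕ) : ℤ) - (n : ℤ)) * x i := by
      rw [mul_sum]
      apply sum_le_sum
      intro k _
      have := single_le_sum (s := range (k + 1))
        (f := fun i => t (((k - i : ℕ) : ℤ) - (n : ℤ)) * x i)
        (fun i _ => mul_nonneg (ht _) (hx0 i)) (mem_range.2 (Nat.lt_succ_self k))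
      simpa using this
    rw [hx1, mul_one] at h1
    exact lt_of_lt_of_le hap h1
  · rintro ⟨hsum, hlt⟩ x ⟨hx0, -, hx⟩
    refine tz_bdd (fun i : ℕ => t ((i : ℤ) - (n : ℤ))) x n ha hone hx0
      (fun j => (tz_eq_iff t n hzero x j).1 (hx j))
      ((n : ℝ) - ∑' i : ℕ, (i : ℝ) * t ((i : ℤ) - (n : ℤ))) (by linarith) ?_
    intro M
    have := tzS_le (fun i : ℕ => t ((i : ℤ) - (n : ℤ))) ha hone hsum M
    linarith
end

section
/- Let t : ℤ → ℝ be nonnegative with t(-1) > 0 and t(-j) = 0 for all j ≥ 2. Assume Σ_{i=0}^∞ t(i-1) = 1, that the derivative of the function z ↦ Σ_{i=0}^∞ t(i-1)·z^i is increasing on [0,1], and that Σ_{i=0}^∞ i·t(i-1) < 1. Then for every positive solution x of the fixed point equation x = Tx, the limit lim_{i→∞} x_i exists and equals x_0·t(-1) / (1 − Σ_{i=1}^∞ i·t(i-1)). -/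
open Filter Topology Finset

namespace ToepAux

/-- Tail sums of `p`. -/
def q (p : ℕ → ℝ) (k : ℕ) : ℝ := 1 - ∑ i ∈ range (k + 1), p i

lemma q_nonneg {p : ℕ → ℝ} (hp : ∀ i, 0 ≤ p i) (h1 : HasSum p 1) (k : ℕ) : 0 ≤ q p k := by
  have := sum_le_hasSum (range (k + 1)) (fun i _ => hp i) h1
  unfold q; linarith

lemma q_sum (p : ℕ → ℝ) (n : ℕ) :
    ∑ k ∈ range n, q p k = n * q p n + ∑ i ∈ range (n + 1), (i : ℝ) * p i := by
  induction n with
  | zero => simp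
  | succ n ih =>
    rw [sum_range_succ, ih, sum_range_succ _ (n + 1)]
    have : q p (n + 1) = q p n - p (n + 1) := by
      unfold q; rw [sum_range_succ _ (n + 1)]; ring
    rw [this]; push_cast; ring

lemma q_hasSum {p : ℕ → ℝ} (hp : ∀ i, 0 ≤ p i) (h1 : HasSum p 1)
    (hs : Summable (fun i : ℕ => (i : ℝ) * p i)) :
    HasSum (q p) (∑' i : ℕ, (i : ℝ) * p i) := by
  rw [hasSum_iff_tendsto_nat_of_nonneg (q_nonneg hp h1)]
  have e : (fun n : ℕ => ∑ k ∈ range n, q p k) =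
      fun n : ℕ => n * q p n + ∑ i ∈ range (n + 1), (i : ℝ) * p i := funext (q_sum p)
  rw [e]
  have hB := (tendsto_add_atTop_iff_nat 1).2 hs.hasSum.tendsto_sum_nat
  have hT : Tendsto (fun n : ℕ => ∑' i : ℕ, ((i + (n + 1) : ℕ) : ℝ) * p (i + (n + 1)))
      atTop (𝓝 0) :=
    (tendsto_add_atTop_iff_nat 1).2 (tendsto_sum_nat_add (fun i : ℕ => (i : ℝ) * p i))
  have hA : Tendsto (fun n : ℕ => (n : ℝ) * q p n) atTop (𝓝 0) := by
    refine squeeze_zero (fun n => mul_nonneg (Nat.cast_nonneg n) (q_nonneg hp h1 n)) ?_ hT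
    intro n
    have hq : q p n = ∑' i : ℕ, p (i + (n + 1)) := by
      have := h1.summable.sum_add_tsum_nat_add (n + 1)
      rw [h1.tsum_eq] at this
      unfold q; linarith
    rw [hq, ← tsum_mul_left]
    refine Summable.tsum_le_tsum (fun i => ?_) (((summable_nat_add_iff (n + 1)).2 h1.summable).mul_left _)
      ((summable_nat_add_iff (n + 1)).2 hs)
    refine mul_le_mul_of_nonneg_right ?_ (hp _)
    exact_mod_cast (by omega : n ≤ i + (n + 1))
  simpa using hA.add hB

lemma renewal {p x : ℕ → ℝ}
    (hx : ∀ j, x j = ∑ k ∈ range (j + 2), p k * x (j + 1 - k)) (n : ℕ) :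
    x n = p 0 * x 0 + ∑ k ∈ range (n + 1), q p k * x (n - k) := by
  induction n with
  | zero => simp [q]; ring
  | succ n ih =>
    have h := hx n
    rw [sum_range_succ'] at h ⊢
    have hd : ∀ k, q p (k + 1) = q p k - p (k + 1) := by
      intro k; unfold q; rw [sum_range_succ _ (k + 1)]; ring
    simp only [hd, sub_mul, sum_sub_distrib, Nat.add_sub_add_right, Nat.sub_zero] at h ⊢
    have h0 : q p 0 = 1 - p 0 := by simp [q]
    rw [h0]
    linarith

lemma mono {p x : ℕ → ℝ} (hp : ∀ i, 0 ≤ p i) (h1 : HasSum p 1) (h0 : 0 < p 0) (hx0 : 0 ≤ x 0)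
    (hr : ∀ n, x n = p 0 * x 0 + ∑ k ∈ range (n + 1), q p k * x (n - k)) : Monotone x := by
  refine monotone_nat_of_le_succ fun n => ?_
  induction n using Nat.strong_induction_on with
  | _ n ih =>
    have e1 := hr n
    have e2 := hr (n + 1)
    rw [sum_range_succ, sum_range_succ'] at e2
    rw [sum_range_succ'] at e1
    have hq0 : q p 0 = 1 - p 0 := by simp [q]
    have hle : ∑ k ∈ range n, q p (k + 1) * x (n - (k + 1)) ≤
        ∑ k ∈ range n, q p (k + 1) * x (n + 1 - (k + 1)) := by
      refine sum_le_sum fun k hk => mul_le_mul_of_nonneg_left ?_ (q_nonneg hp h1 _)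
      have hk := mem_range.1 hk
      have := ih (n - (k + 1)) (by omega)
      rwa [show n - (k + 1) + 1 = n + 1 - (k + 1) by omega] at this
    have hl := mul_nonneg (q_nonneg hp h1 (n + 1)) hx0
    simp only [Nat.sub_zero, Nat.sub_self, hq0] at e1 e2
    have : 0 ≤ p 0 * (x (n + 1) - x n) := by linarith
    have := nonneg_of_mul_nonneg_right this h0
    linarith

lemma main {p x : ℕ → ℝ} (hp : ∀ i, 0 ≤ p i) (h1 : HasSum p 1) (h0 : 0 < p 0)
    (hs : Summable (fun i : ℕ => (i : ℝ) * p i)) (hlt : ∑' i : ℕ, (i : ℝ) * p i < 1)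
    (hx0 : ∀ i, 0 ≤ x i)
    (hx : ∀ j, x j = ∑ k ∈ range (j + 2), p k * x (j + 1 - k)) :
    Tendsto x atTop (𝓝 (x 0 * p 0 / (1 - ∑' i : ℕ, (i : ℝ) * p i))) := by
  have hr := renewal hx
  have hm := mono hp h1 h0 (hx0 0) hr
  have hq := q_hasSum hp h1 hs
  have hqn := q_nonneg hp h1
  set m := ∑' i : ℕ, (i : ℝ) * p i with hmdef
  have hb : ∀ n, x n ≤ x 0 * p 0 / (1 - m) := by
    intro n
    rw [le_div_iff₀ (by linarith)]
    have a : ∑ k ∈ range (n + 1), q p k * x (n - k) ≤ (∑ k ∈ range (n + 1), q p k) * x n := by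
      rw [sum_mul]
      exact sum_le_sum fun k _ => mul_le_mul_of_nonneg_left (hm (by omega)) (hqn k)
    have b := mul_le_mul_of_nonneg_right
      (sum_le_hasSum (range (n + 1)) (fun i _ => hqn i) hq) (hx0 n)
    have := hr n
    nlinarith
  obtain ⟨L, hL⟩ : ∃ L, Tendsto x atTop (𝓝 L) :=
    ⟨_, tendsto_atTop_ciSup hm ⟨_, by rintro _ ⟨n, rfl⟩; exact hb n⟩⟩
  set B := x 0 * p 0 / (1 - m)
  have hD : Tendsto (fun n => ∑' k, if k < n + 1 then q p k * x (n - k) else 0) atTop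
      (𝓝 (∑' k, q p k * L)) := by
    refine tendsto_tsum_of_dominated_convergence (bound := fun k => q p k * B)
      (hq.summable.mul_right B) ?_ ?_
    · intro k
      have : Tendsto (fun n => q p k * x (n - k)) atTop (𝓝 (q p k * L)) :=
        (hL.comp (tendsto_sub_atTop_nat k)).const_mul _
      refine this.congr' ?_
      filter_upwards [eventually_ge_atTop k] with n hn
      rw [if_pos (by omega)]
    · refine Eventually.of_forall fun n k => ?_
      have hB : 0 ≤ B := (hx0 0).trans (hb 0)
      split_ifs
      · rw [Real.norm_of_nonneg (mul_nonneg (hqn k) (hx0 _))]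
        exact mul_le_mul_of_nonneg_left (hb _) (hqn k)
      · simpa using mul_nonneg (hqn k) hB
  have hE : Tendsto x atTop (𝓝 (p 0 * x 0 + m * L)) := by
    rw [tsum_mul_right, hq.tsum_eq] at hD
    refine (hD.const_add (p 0 * x 0)).congr fun n => ?_
    rw [tsum_eq_sum (s := range (n + 1)) (fun k hk => if_neg (by simpa using hk)), hr n]
    congr 1
    exact sum_congr rfl fun k hk => if_pos (mem_range.1 hk)
  have := tendsto_nhds_unique hL hE
  have hLB : L = B := by
    rw [eq_div_iff (by linarith)]; linarith
  rwa [← hLB]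

end ToepAux

/-- The `n = 1` case of Theorem 1.1(ii): if `Σ_{i=0}^∞ t(i-1) = 1`, the
derivative of `z ↦ Σ_{i=0}^∞ t(i-1)·z^i` is increasing on `[0,1]` and
`Σ_{i=0}^∞ i·t(i-1) < 1`, then for every positive solution `x` of `x = Tx`
the limit of `x_i` exists and equals `x_0·t(-1)/(1 − Σ_{i=1}^∞ i·t(i-1))`. -/
theorem toeplitz_n_eq_one_limit
    (t : ℤ → ℝ) (ht : ∀ i : ℤ, 0 ≤ t i)
    (htn : 0 < t (-1))
    (hzero : ∀ j : ℤ, 2 ≤ j → t (-j) = 0)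
    (hone : HasSum (fun i : ℕ => t ((i : ℤ) - 1)) 1)
    (hderiv : MonotoneOn
      (deriv fun z : ℝ => ∑' i : ℕ, t ((i : ℤ) - 1) * z ^ i)
      (Set.Icc (0 : ℝ) 1))
    (hsum : Summable (fun i : ℕ => (i : ℝ) * t ((i : ℤ) - 1)))
    (hlt : ∑' i : ℕ, (i : ℝ) * t ((i : ℤ) - 1) < 1)
    (x : ℕ → ℝ) (hx : IsPosToeplitzSolution t x) :
    Filter.Tendsto x Filter.atTop
      (nhds (x 0 * t (-1) / (1 - ∑' i : ℕ, (i : ℝ) * t ((i : ℤ) - 1)))) := by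
  obtain ⟨hx0, -, hx⟩ := hx
  have := ToepAux.main (p := fun i : ℕ => t ((i : ℤ) - 1)) (x := x) (fun i => ht _) hone
    (by simpa using htn) hsum hlt hx0 ?_
  · simpa using this
  · intro j
    rw [← (hx j).tsum_eq, tsum_eq_sum (s := range (j + 2)), ← sum_range_reflect]
    · refine sum_congr rfl fun k hk => ?_
      have hk := mem_range.1 hk
      rw [show j + 2 - 1 - k = j + 1 - k by omega]
      congr 2
      push_cast [show k ≤ j + 1 by omega]
      ring
    · intro i hi
      have hi : j + 2 ≤ i := by simpa using hi
      have := hzero ((i : ℤ) - j) (by omega)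
      rw [neg_sub] at this
      rw [this, zero_mul]
end

section
/- Let t : ℤ → ℝ be nonnegative and let n ≥ 1 be such that t(-n) > 0 and t(-j) = 0 for all j > n. Assume Σ_{i=0}^∞ t(i-n) < 1, and assume that the derivative of the function z ↦ (τ(z))^{1/n} is increasing on [0,1], where τ(z) = Σ_{i=0}^∞ t(i-n)·z^i. Then every positive solution of the fixed point equation x = Tx is unbounded. -/
/-- Theorem 1.1(iii): if `Σ_{i=0}^∞ t(i-n) < 1` and the derivative of
`z ↦ (τ(z))^{1/n}` is increasing on `[0,1]`, then every positive solution of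
`x = Tx` is unbounded. -/
theorem toeplitz_sum_lt_one_unbounded
    (t : ℤ → ℝ) (ht : ∀ i : ℤ, 0 ≤ t i)
    (n : ℕ) (hn : 1 ≤ n) (htn : 0 < t (-(n : ℤ)))
    (hzero : ∀ j : ℤ, (n : ℤ) < j → t (-j) = 0)
    (hsum : Summable (fun i : ℕ => t ((i : ℤ) - (n : ℤ))))
    (hlt : ∑' i : ℕ, t ((i : ℤ) - (n : ℤ)) < 1)
    (hderiv : MonotoneOn
      (deriv fun z : ℝ => (∑' i : ℕ, t ((i : ℤ) - (n : ℤ)) * z ^ i) ^ (1 / (n : ℝ)))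
      (Set.Icc (0 : ℝ) 1))
    (x : ℕ → ℝ) (hx : IsPosToeplitzSolution t x) :
    ¬ ∃ C : ℝ, ∀ i, x i ≤ C := by
  rintro ⟨C, hC⟩
  obtain ⟨hx0, ⟨i₀, hi₀⟩, hfix⟩ := hx
  set s : ℝ := ∑' i : ℕ, t ((i : ℤ) - (n : ℤ)) with hs
  have hs0 : 0 ≤ s := tsum_nonneg fun i => ht _
  -- one application of `T` improves any upper bound by the factor `s < 1`
  have step : ∀ D : ℝ, 0 ≤ D → (∀ i, x i ≤ D) → ∀ j, x j ≤ s * D := by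
    intro D hD hb j
    have h1 : HasSum (fun i : ℕ => t ((j : ℤ) - (i : ℤ)) * x i)
        (∑ i ∈ Finset.range (j + n + 1), t ((j : ℤ) - (i : ℤ)) * x i) := by
      apply hasSum_sum_of_ne_finset_zero
      intro i hi
      rw [Finset.mem_range] at hi
      have h := hzero ((i : ℤ) - j) (by omega)
      rw [neg_sub] at h
      rw [h, zero_mul]
    rw [(hfix j).unique h1]
    calc ∑ i ∈ Finset.range (j + n + 1), t ((j : ℤ) - (i : ℤ)) * x i
        ≤ ∑ i ∈ Finset.range (j + n + 1), t ((j : ℤ) - (i : ℤ)) * D :=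
          Finset.sum_le_sum fun i _ => mul_le_mul_of_nonneg_left (hb i) (ht _)
      _ = (∑ i ∈ Finset.range (j + n + 1), t ((j : ℤ) - (i : ℤ))) * D := by
          rw [Finset.sum_mul]
      _ = (∑ i ∈ Finset.range (j + n + 1), t ((i : ℤ) - (n : ℤ))) * D := by
          rw [← Finset.sum_range_reflect]
          congr 1
          apply Finset.sum_congr rfl
          intro i hi
          rw [Finset.mem_range] at hi
          congr 1
          omega
      _ ≤ s * D := mul_le_mul_of_nonneg_right
          (hsum.sum_le_tsum _ fun i _ => ht _) hD
  have hC0 : 0 ≤ C := (hx0 0).trans (hC 0)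
  have iter : ∀ k : ℕ, ∀ i, x i ≤ s ^ k * C := by
    intro k
    induction k with
    | zero => simpa using hC
    | succ k ih =>
      intro i
      have h := step (s ^ k * C) (by positivity) ih i
      rw [pow_succ]
      linarith
  have hlim : Filter.Tendsto (fun k : ℕ => s ^ k * C) Filter.atTop (nhds (0 * C)) :=
    (tendsto_pow_atTop_nhds_zero_of_lt_one hs0 hlt).mul_const C
  have := ge_of_tendsto' hlim fun k => iter k i₀
  linarith
end

section
/- Let S be a real Banach space and let M ⊆ S be a nonempty, closed, convex subset. Let A : S → S and B : S → S be maps such that: (i) there is a constant α < 1 with ‖B x − B y‖ ≤ α‖x − y‖ for all x, y ∈ S; (ii) A is continuous on M and the image A(M) is contained in a compact subset of S; (iii) for all x ∈ S and y ∈ M, if x = B x + A y then x ∈ M. Then there exists y ∈ M with A y + B y = y. -/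
open MeasureTheory Set Metric Filter Topology

theorem bk_poly {E : Type*} [NormedAddCommGroup E] [InnerProductSpace ℝ E] [FiniteDimensional ℝ E]
    [MeasurableSpace E] [BorelSpace E] (D : E → E →L[ℝ] E) (K : Set E) (hK : IsCompact K)
    (hD : ContinuousOn D K) :
    ∃ p : Polynomial ℝ, ∀ t : ℝ, p.eval t = ∫ x in K, (1 + t • D x).det := by
  classical
  let b := Module.finBasis ℝ E
  have hent : ∀ i j, Continuous (fun x : K => b.repr (D x (b j)) i) := by
    intro i j
    have h1 : Continuous (fun x : K => D x (b j)) :=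
      (continuousOn_iff_continuous_domRestrict.1 hD).clm_apply continuous_const
    have h2 : Continuous (fun v : E => b.repr v i) :=
      (b.coord i).continuous_of_finiteDimensional
    exact h2.comp h1
  let M : Matrix (Fin (Module.finrank ℝ E)) (Fin (Module.finrank ℝ E)) C(K, ℝ) :=
    fun i j => ⟨_, hent i j⟩
  let P : Polynomial C(K, ℝ) := (1 + (Polynomial.X : Polynomial C(K, ℝ)) • M.map Polynomial.C).det
  have key : ∀ (x : K) (t : ℝ), (1 + t • D x).det = ∑ k ∈ P.support, (P.coeff k) x * t ^ k := by
    intro x t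
    let e : C(K, ℝ) →+* ℝ :=
      { toFun := fun f => f x, map_one' := rfl, map_mul' := fun _ _ => rfl, map_zero' := rfl,
        map_add' := fun _ _ => rfl }
    have h1 : (Polynomial.eval₂RingHom e t) P = ∑ k ∈ P.support, (P.coeff k) x * t ^ k := by
      rw [Polynomial.coe_eval₂RingHom, Polynomial.eval₂_eq_sum]
      rfl
    rw [← h1, RingHom.map_det]
    change LinearMap.det ((1 + t • D x : E →L[ℝ] E) : E →ₗ[ℝ] E) = _
    rw [← LinearMap.det_toMatrix b]
    congr 1
    ext i j
    have h2 : (Polynomial.eval₂RingHom e t) ((M.map Polynomial.C) i j) = b.repr (D x (b j)) i := by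
      rw [Matrix.map_apply, Polynomial.coe_eval₂RingHom, Polynomial.eval₂_C]
      rfl
    have h3 : (Polynomial.eval₂RingHom e t) Polynomial.X = t := Polynomial.eval₂_X _ _
    rw [RingHom.mapMatrix_apply, Matrix.map_apply, Matrix.add_apply, Matrix.smul_apply,
      smul_eq_mul, map_add, map_mul, h2, h3, LinearMap.toMatrix_apply]
    by_cases hij : i = j
    · subst hij; simp
    · simp [hij]
  let _ : MeasureSpace K := Measure.Subtype.measureSpace
  refine ⟨∑ k ∈ P.support, Polynomial.C (∫ x : K, P.coeff k x) * Polynomial.X ^ k, fun t => ?_⟩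
  rw [← integral_subtype hK.measurableSet]
  simp_rw [key]
  have : CompactSpace K := isCompact_iff_compactSpace.1 hK
  have : IsFiniteMeasure (volume : Measure K) := ⟨by
    rw [Measure.Subtype.volume_univ hK.measurableSet.nullMeasurableSet]; exact hK.measure_lt_top⟩
  rw [integral_finsetSum]
  · simp [Polynomial.eval_finsetSum, integral_mul_const]
  · intro k _
    exact Integrable.mul_const ((P.coeff k).continuous.integrable_of_hasCompactSupport
      (HasCompactSupport.of_compactSpace _)) _

theorem bk_no_retraction {E : Type*} [NormedAddCommGroup E] [InnerProductSpace ℝ E]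
    [FiniteDimensional ℝ E] (r : E → E) (U : Set E) (hU : IsOpen U)
    (hBU : closedBall 0 1 ⊆ U) (hr : ContDiffOn ℝ 1 r U) (hn : ∀ x ∈ U, ‖r x‖ = 1)
    (hid : ∀ x, ‖x‖ = 1 → r x = x) : False := by
  let _ : MeasurableSpace E := borel E
  have : BorelSpace E := ⟨rfl⟩
  set K : Set E := closedBall 0 1 with hKdef
  have hK : IsCompact K := isCompact_closedBall _ _
  have hKc : Convex ℝ K := convex_closedBall _ _
  let D : E → E →L[ℝ] E := fun x => fderiv ℝ r x - 1
  have hrd : ∀ x ∈ K, HasFDerivAt r (fderiv ℝ r x) x := fun x hx =>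
    ((hr.contDiffAt (hU.mem_nhds (hBU hx))).differentiableAt one_ne_zero).hasFDerivAt
  have hDc : ContinuousOn D K :=
    ((hr.continuousOn_fderiv_of_isOpen hU le_rfl).mono hBU).sub continuousOn_const
  let G : E → E := fun x => r x - x
  have hGd : ∀ x ∈ K, HasFDerivAt G (D x) x := fun x hx => (hrd x hx).sub (hasFDerivAt_id x)
  obtain ⟨L0, hL0⟩ := hK.exists_bound_of_continuousOn hDc
  let L : ℝ := max L0 1
  have hL1 : 0 < L := lt_of_lt_of_le one_pos (le_max_right _ _)
  have hDL : ∀ x ∈ K, ‖D x‖ ≤ L := fun x hx => (hL0 x hx).trans (le_max_left _ _)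
  have hGL : ∀ x ∈ K, ∀ y ∈ K, ‖G y - G x‖ ≤ L * ‖y - x‖ := fun x hx y hy =>
    hKc.norm_image_sub_le_of_norm_hasFDerivWithin_le
      (fun z hz => (hGd z hz).hasFDerivWithinAt) hDL hx hy
  -- extension by zero
  classical
  let H : E → E := fun x => if x ∈ K then G x else 0
  have hmix : ∀ x ∈ K, ∀ y, y ∉ K → ‖G x‖ ≤ L * ‖y - x‖ := by
    intro x hx y hy
    have hx1 : ‖x‖ ≤ 1 := by simpa [K] using hx
    have hy1 : 1 < ‖y‖ := by simpa [K] using hy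
    have hcont : ContinuousOn (fun s : ℝ => ‖x + s • (y - x)‖) (Icc 0 1) := by fun_prop
    obtain ⟨s, hs, hs1⟩ := intermediate_value_Icc (zero_le_one) hcont
      (show (1:ℝ) ∈ Icc _ _ by simp [hx1, hy1.le])
    have hz : G (x + s • (y - x)) = 0 := by
      simp only [G]; rw [hid _ hs1, sub_self]
    have hzK : x + s • (y - x) ∈ K := by simp only [K, mem_closedBall_zero_iff]; exact hs1.le
    have := hGL x hx _ hzK
    rw [hz, zero_sub, norm_neg, add_sub_cancel_left, norm_smul, Real.norm_of_nonneg hs.1] at this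
    refine this.trans ?_
    gcongr
    exact mul_le_of_le_one_left (norm_nonneg _) hs.2
  have hHL : ∀ x y, ‖H y - H x‖ ≤ L * ‖y - x‖ := by
    intro x y
    by_cases hx : x ∈ K <;> by_cases hy : y ∈ K
    · simp only [H, hx, hy, if_true]; exact hGL x hx y hy
    · simp only [H, hx, hy, if_true, if_false, zero_sub, norm_neg]; exact hmix x hx y hy
    · simp only [H, hx, hy, if_true, if_false, sub_zero]; rw [norm_sub_rev y x]; exact hmix y hy x hx
    · simp only [H, hx, hy, if_false, sub_self, norm_zero]; positivity
  -- the image of the ball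
  have himg : ∀ t : ℝ, 0 ≤ t → t * L < 1 → t ≤ 1 →
      InjOn (fun x => x + t • G x) K ∧ (fun x => x + t • G x) '' K = K := by
    intro t ht htL ht1
    refine ⟨?_, ?_⟩
    · intro x hx y hy hxy
      simp only at hxy
      have h1 : y - x = - (t • (G y - G x)) := by
        rw [smul_sub, neg_sub, sub_eq_sub_iff_add_eq_add, ← hxy]
        exact (add_comm _ _)
      have h2 : ‖y - x‖ ≤ t * (L * ‖y - x‖) := by
        conv_lhs => rw [h1, norm_neg, norm_smul, Real.norm_of_nonneg ht]
        exact mul_le_mul_of_nonneg_left (hGL x hx y hy) ht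
      have h3 : ‖y - x‖ = 0 := by
        by_contra hne
        have : 0 < ‖y - x‖ := lt_of_le_of_ne (norm_nonneg _) (Ne.symm hne)
        nlinarith
      exact (sub_eq_zero.1 (norm_eq_zero.1 h3)).symm
    · apply Subset.antisymm
      · rintro _ ⟨x, hx, rfl⟩
        have h1 : x + t • G x = (1 - t) • x + t • r x := by
          simp only [G]; module
        simp only [h1]
        refine hKc hx ?_ (sub_nonneg.2 ht1) ht (by ring)
        simp only [K, mem_closedBall_zero_iff]; exact (hn x (hBU hx)).le
      · intro y hy
        have hc : ContractingWith (⟨t * L, by positivity⟩ : NNReal) (fun x => y - t • H x) := by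
          refine ⟨by exact_mod_cast htL, LipschitzWith.of_dist_le_mul fun a b => ?_⟩
          rw [dist_eq_norm, dist_eq_norm]
          have : (y - t • H a) - (y - t • H b) = - (t • (H a - H b)) := by module
          rw [this, norm_neg, norm_smul, Real.norm_of_nonneg ht]
          change _ ≤ (t * L) * _
          rw [mul_assoc]
          exact mul_le_mul_of_nonneg_left (hHL b a) ht
        have hfix := hc.fixedPoint_isFixedPt
        set x := ContractingWith.fixedPoint _ hc
        have hfx : y - t • H x = x := hfix
        by_cases hx : x ∈ K
        · refine ⟨x, hx, ?_⟩
          simp only [H, hx, if_true] at hfx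
          simp only
          nth_rewrite 1 [← hfx]
          simp
        · simp only [H, hx, if_false, smul_zero, sub_zero] at hfx
          exact absurd (hfx ▸ hy) hx
  -- positivity of the determinant for small t
  have hdet : ∃ δ > 0, ∀ T : E →L[ℝ] E, ‖T‖ < δ → 0 < (1 + T).det := by
    have hc : Continuous (fun T : E →L[ℝ] E => (1 + T).det) :=
      ContinuousLinearMap.continuous_det.comp (continuous_const.add continuous_id)
    have h0 : 0 < (fun T : E →L[ℝ] E => (1 + T).det) 0 := by
      simp [ContinuousLinearMap.det]
    have := hc.continuousAt.eventually (lt_mem_nhds h0)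
    obtain ⟨δ, hδ, h⟩ := Metric.eventually_nhds_iff.1 this
    exact ⟨δ, hδ, fun T hT => h (by simpa using hT)⟩
  obtain ⟨δ, hδ, hdet⟩ := hdet
  obtain ⟨p, hp⟩ := bk_poly D K hK hDc
  have hsmall : ∀ t : ℝ, 0 < t → t < min (min δ 1 / L) 1 → p.eval t = volume.real K := by
    intro t ht htm
    have ht1 : t ≤ 1 := (htm.trans_le (min_le_right _ _)).le
    have h2 : t * L < min δ 1 := (lt_div_iff₀ hL1).1 (htm.trans_le (min_le_left _ _))
    have htL : t * L < 1 := h2.trans_le (min_le_right _ _)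
    have htd : t * L < δ := h2.trans_le (min_le_left _ _)
    obtain ⟨hinj, him⟩ := himg t ht.le htL ht1
    have hcv := integral_image_eq_integral_abs_det_fderiv_smul (volume : Measure E)
      hK.measurableSet (f := fun x => x + t • G x) (f' := fun x => 1 + t • D x)
      (fun x hx => ((hasFDerivAt_id x).add ((hGd x hx).const_smul t)).hasFDerivWithinAt) hinj
      (fun _ => (1:ℝ))
    rw [him] at hcv
    rw [hp]
    simp only [smul_eq_mul, mul_one] at hcv
    rw [setIntegral_const, smul_eq_mul, mul_one] at hcv
    rw [hcv]
    refine setIntegral_congr_fun hK.measurableSet fun x hx => ?_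
    refine (abs_of_pos (hdet _ ?_)).symm
    rw [norm_smul, Real.norm_of_nonneg ht.le]
    exact lt_of_le_of_lt (mul_le_mul_of_nonneg_left (hDL x hx) ht.le) htd
  have hpc : p = Polynomial.C (volume.real K) := by
    refine Polynomial.eq_of_infinite_eval_eq _ _ ((Ioo_infinite (a := (0:ℝ))
      (b := min (min δ 1 / L) 1) (by positivity)).mono ?_)
    intro t ht
    simpa using hsmall t ht.1 ht.2
  have h1 : p.eval 1 = 0 := by
    rw [hp]
    refine setIntegral_eq_zero_of_forall_eq_zero fun x hx => ?_
    have hD1 : 1 + (1:ℝ) • D x = fderiv ℝ r x := by simp [D]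
    rw [hD1]
    by_contra hne
    have hperp : ∀ v, inner ℝ (r x) (fderiv ℝ r x v) = 0 := by
      intro v
      have ha : HasFDerivAt (fun y => ‖r y‖ ^ 2) _ x := (hrd x hx).norm_sq
      have hb : HasFDerivAt (fun y => ‖r y‖ ^ 2) (0 : E →L[ℝ] ℝ) x := by
        refine (hasFDerivAt_const (1:ℝ) x).congr_of_eventuallyEq ?_
        filter_upwards [hU.mem_nhds (hBU hx)] with y hy
        simp [hn y hy]
      have := congrArg (fun T : E →L[ℝ] ℝ => T v) (ha.unique hb)
      simpa using this
    have hun : IsUnit (LinearMap.det (fderiv ℝ r x : E →ₗ[ℝ] E)) := isUnit_iff_ne_zero.2 hne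
    have hsurj := (LinearMap.equivOfIsUnitDet (f := (fderiv ℝ r x : E →ₗ[ℝ] E)) hun).surjective (r x)
    obtain ⟨v, hv⟩ := hsurj
    have hv' : fderiv ℝ r x v = r x := by
      rw [← hv, ← LinearEquiv.coe_coe, LinearMap.coe_equivOfIsUnitDet]; rfl
    have := hperp v
    rw [hv', real_inner_self_eq_norm_sq, hn x (hBU hx)] at this
    norm_num at this
  rw [hpc, Polynomial.eval_C] at h1
  have hpos : 0 < volume.real K :=
    ENNReal.toReal_pos (measure_closedBall_pos _ _ one_pos).ne' hK.measure_lt_top.ne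
  exact hpos.ne' h1

theorem bk_brouwer {E : Type*} [NormedAddCommGroup E] [InnerProductSpace ℝ E]
    [FiniteDimensional ℝ E] (f : E → E) (hf : Continuous f) (hb : ∀ x, ‖f x‖ ≤ 1) :
    ∃ x, f x = x := by
  by_contra! hno
  obtain ⟨g, hg, hgx⟩ : ∃ g : E → E, ContDiff ℝ 1 g ∧ ∀ x, g x ∈ ball (f x) (dist x (f x)) ∩ closedBall 0 1 := by
    obtain ⟨g, hg⟩ := exists_contMDiffMap_forall_mem_convex_of_local_const
      (modelWithCornersSelf ℝ E) (n := 1) (t := fun x => ball (f x) (dist x (f x)) ∩ closedBall 0 1)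
      (fun x => (convex_ball _ _).inter (convex_closedBall _ _)) (fun x => ⟨f x, by
        have h1 : ∀ᶠ y in 𝓝 x, dist (f x) (f y) < dist y (f y) := by
          have hc : Continuous (fun y => dist y (f y) - dist (f x) (f y)) := by fun_prop
          have := hc.continuousAt.eventually (lt_mem_nhds (a := 0) (b := dist x (f x) - dist (f x) (f x))
            (by simpa using (hno x).symm))
          filter_upwards [this] with y hy
          linarith
        filter_upwards [h1] with y hy
        exact ⟨hy, by simpa using hb x⟩⟩)
    exact ⟨g, contMDiff_iff_contDiff.1 g.contMDiff, hg⟩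
  have hgn : ∀ x, ‖g x‖ ≤ 1 := fun x => by simpa using (hgx x).2
  have hgne : ∀ x, x - g x ≠ 0 := fun x h => by
    have := (hgx x).1
    rw [← sub_eq_zero.1 h] at this
    simp at this
  let u : E → E := fun x => x - g x
  have hu : ContDiff ℝ 1 u := contDiff_id.sub hg
  let d : E → ℝ := fun x => inner ℝ x (u x) ^ 2 + ‖u x‖ ^ 2 * (1 - ‖x‖ ^ 2)
  have hd : ContDiff ℝ 1 d :=
    ((contDiff_id.inner ℝ hu).pow 2).add ((hu.norm_sq ℝ).mul (contDiff_const.sub (contDiff_id.norm_sq ℝ)))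
  let s : E → ℝ := fun x => (-inner ℝ x (u x) + √(d x)) / ‖u x‖ ^ 2
  have hun : ∀ x, 0 < ‖u x‖ ^ 2 := fun x => by
    have := norm_pos_iff.2 (hgne x)
    positivity
  have hin : ∀ x, ‖x‖ = 1 → 0 < inner ℝ x (u x) := by
    intro x hx
    have h1 : inner ℝ x (u x) = 1 - inner ℝ x (g x) := by
      simp [u, inner_sub_right, hx]
    have h2 : ‖x - g x‖ ^ 2 = ‖x‖ ^ 2 - 2 * inner ℝ x (g x) + ‖g x‖ ^ 2 := norm_sub_sq_real _ _
    have h3 := hun x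
    have h4 := hgn x
    have h5 := norm_nonneg (g x)
    simp only [u] at h3
    rw [h1]
    rw [hx] at h2
    nlinarith
  refine bk_no_retraction (fun x => x + s x • u x) {x | 0 < d x}
    (isOpen_lt continuous_const hd.continuous) ?_ ?_ ?_ ?_
  · intro x hx
    have hx1 : ‖x‖ ≤ 1 := by simpa using hx
    rcases hx1.lt_or_eq with h | h
    · have : 0 < 1 - ‖x‖ ^ 2 := by nlinarith [norm_nonneg x]
      have := mul_pos (hun x) this
      simp only [mem_ofPred_eq, d]; positivity
    · have := hin x h
      simp only [mem_ofPred_eq, d, h]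
      have : 0 < inner ℝ x (u x) ^ 2 := by positivity
      linarith
  · have hs : ContDiffOn ℝ 1 s {x | 0 < d x} := by
      refine ContDiffOn.div ?_ (hu.norm_sq ℝ).contDiffOn (fun x _ => (hun x).ne')
      exact (contDiff_id.inner ℝ hu).neg.contDiffOn.add
        (hd.contDiffOn.sqrt (fun x hx => (ne_of_gt hx)))
    exact contDiffOn_id.add (hs.smul hu.contDiffOn)
  · intro x hx
    have hx' : 0 < d x := hx
    have h1 : ‖x + s x • u x‖ ^ 2 = 1 := by
      rw [norm_add_sq_real, inner_smul_right, norm_smul, mul_pow, Real.norm_eq_abs, sq_abs]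
      have hq : √(d x) ^ 2 = d x := Real.sq_sqrt hx'.le
      have hs : s x * ‖u x‖ ^ 2 = -inner ℝ x (u x) + √(d x) := div_mul_cancel₀ _ (hun x).ne'
      have h3 : ‖u x‖ ^ 2 * (‖x‖ ^ 2 + 2 * (s x * inner ℝ x (u x)) + s x ^ 2 * ‖u x‖ ^ 2 - 1) = 0 := by
        have e1 : ‖u x‖ ^ 2 * (‖x‖ ^ 2 + 2 * (s x * inner ℝ x (u x)) + s x ^ 2 * ‖u x‖ ^ 2 - 1)
          = ‖u x‖ ^ 2 * (‖x‖ ^ 2 - 1) + 2 * (s x * ‖u x‖ ^ 2) * inner ℝ x (u x)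
            + (s x * ‖u x‖ ^ 2) ^ 2 := by ring
        rw [e1, hs]
        have hdx : d x = inner ℝ x (u x) ^ 2 + ‖u x‖ ^ 2 * (1 - ‖x‖ ^ 2) := rfl
        linear_combination hq + hdx
      have := (mul_eq_zero.1 h3).resolve_left (hun x).ne'
      linarith
    nlinarith [norm_nonneg (x + s x • u x)]
  · intro x hx
    have hdx : d x = inner ℝ x (u x) ^ 2 := by simp [d, hx]
    have : s x = 0 := by
      simp only [s]
      rw [hdx, Real.sqrt_sq (hin x hx).le]; simp
    simp [this]

theorem bk_schauder_approx {S : Type*} [NormedAddCommGroup S] [NormedSpace ℝ S]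
    (M : Set S) (hne : M.Nonempty) (hconv : Convex ℝ M) (T : S → S) (hT : ContinuousOn T M)
    (hTM : MapsTo T M M) (K : Set S) (hK : IsCompact K) (hTK : T '' M ⊆ K) (ε : ℝ) (hε : 0 < ε) :
    ∃ x ∈ M, ‖x - T x‖ ≤ ε := by
  classical
  obtain ⟨y0, hy0⟩ := hne
  have htb : TotallyBounded (T '' M) := hK.totallyBounded.subset hTK
  obtain ⟨F, hFs, hFf, hFc⟩ := totallyBounded_iff_subset.1 htb _ (dist_mem_uniformity hε)
  have : Fintype F := hFf.fintype
  have hFM : ∀ i : F, (i : S) ∈ M := fun i => by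
    obtain ⟨z, hz, h⟩ := hFs i.2
    exact h ▸ hTM hz
  let σ : EuclideanSpace ℝ F → ℝ := fun l => ∑ i, max (l i) 0
  have hσ0 : ∀ l, 0 ≤ σ l := fun l => Finset.sum_nonneg fun i _ => le_max_right _ _
  have hσc : Continuous σ := by simp only [σ]; fun_prop
  have hm : ∀ l, 0 < max (σ l) 1 := fun l => lt_of_lt_of_le one_pos (le_max_right _ _)
  let c : EuclideanSpace ℝ F → S := fun l => (max (σ l) 1)⁻¹ • (∑ i, max (l i) 0 • (i : S) + max (1 - σ l) 0 • y0)
  have hcc : Continuous c := by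
    have : Continuous fun l => (max (σ l) 1)⁻¹ :=
      (hσc.max continuous_const).inv₀ (fun l => (hm l).ne')
    refine this.smul (Continuous.add ?_ ?_)
    · fun_prop
    · fun_prop
  have hcM : ∀ l, c l ∈ M := by
    intro l
    have h1 : c l = ∑ o : Option F, ((max (σ l) 1)⁻¹ * (o.elim (max (1 - σ l) 0) (fun i => max (l i) 0)))
        • (o.elim y0 (fun i => (i : S))) := by
      simp only [c, Fintype.sum_option, Option.elim, smul_add, Finset.smul_sum, mul_smul]
      rw [add_comm]
    rw [h1]
    refine hconv.sum_mem ?_ ?_ ?_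
    · rintro (_ | i) _
      · exact mul_nonneg (inv_nonneg.2 (hm l).le) (le_max_right _ _)
      · exact mul_nonneg (inv_nonneg.2 (hm l).le) (le_max_right _ _)
    · rw [← Finset.mul_sum, Fintype.sum_option]
      simp only [Option.elim]
      change _ * (_ + σ l) = 1
      have : max (1 - σ l) 0 + σ l = max (σ l) 1 := by
        rcases le_total (σ l) 1 with h | h
        · rw [max_eq_left (by linarith), max_eq_right h]; ring
        · rw [max_eq_right (by linarith), max_eq_left h]; ring
      rw [this, inv_mul_cancel₀ (hm l).ne']
    · rintro (_ | i) _
      · exact hy0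
      · exact hFM i
  have hTc : Continuous (fun l => T (c l)) := hT.comp_continuous hcc hcM
  let φ : F → EuclideanSpace ℝ F → ℝ := fun i l => max (ε - ‖T (c l) - i‖) 0
  have hφc : ∀ i, Continuous (φ i) := fun i =>
    (continuous_const.sub (hTc.sub continuous_const).norm).max continuous_const
  have hφ0 : ∀ i l, 0 ≤ φ i l := fun i l => le_max_right _ _
  let Φ : EuclideanSpace ℝ F → ℝ := fun l => ∑ i, φ i l
  have hΦc : Continuous Φ := continuous_finsetSum _ fun i _ => hφc i
  have hΦ : ∀ l, 0 < Φ l := by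
    intro l
    have h := hFc (mem_image_of_mem T (hcM l))
    simp only [mem_iUnion] at h
    obtain ⟨i, hi, h⟩ := h
    have h' : dist (T (c l)) i < ε := h
    rw [dist_eq_norm] at h'
    refine Finset.sum_pos' (fun i _ => hφ0 i l) ⟨⟨i, hi⟩, Finset.mem_univ _, ?_⟩
    exact lt_max_of_lt_left (by simpa using h')
  let g : EuclideanSpace ℝ F → EuclideanSpace ℝ F := fun l => WithLp.toLp 2 (fun i => φ i l / Φ l)
  have hgc : Continuous g := by
    refine (PiLp.continuous_toLp 2 _).comp (continuous_pi fun i => ?_)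
    exact (hφc i).div hΦc (fun l => (hΦ l).ne')
  have hg0 : ∀ l i, 0 ≤ g l i := fun l i => div_nonneg (hφ0 i l) (hΦ l).le
  have hg1 : ∀ l, ∑ i, g l i = 1 := fun l => by
    change ∑ i, φ i l / Φ l = 1
    rw [← Finset.sum_div]; exact div_self (hΦ l).ne'
  have hgn : ∀ l, ‖g l‖ ≤ 1 := by
    intro l
    rw [EuclideanSpace.norm_eq]
    refine Real.sqrt_le_one.2 ?_
    rw [← hg1 l]
    refine Finset.sum_le_sum fun i _ => ?_
    rw [Real.norm_of_nonneg (hg0 l i)]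
    have : g l i ≤ 1 := by
      rw [← hg1 l]
      exact Finset.single_le_sum (f := fun i => g l i) (fun j _ => hg0 l j) (Finset.mem_univ i)
    nlinarith [hg0 l i]
  obtain ⟨l, hl⟩ := bk_brouwer g hgc hgn
  have hl0 : ∀ i, 0 ≤ l i := fun i => by rw [← hl]; exact hg0 l i
  have hl1 : ∑ i, l i = 1 := by have := hg1 l; rwa [hl] at this
  have hσ1 : σ l = 1 := by
    rw [← hl1]; exact Finset.sum_congr rfl fun i _ => max_eq_left (hl0 i)
  have hcl : c l = ∑ i, l i • (i : S) := by
    simp only [c, hσ1]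
    simp [fun i => max_eq_left (hl0 i)]
  refine ⟨c l, hcM l, ?_⟩
  have h1 : c l - T (c l) = ∑ i, l i • ((i : S) - T (c l)) := by
    simp only [smul_sub, Finset.sum_sub_distrib, ← Finset.sum_smul, hl1, one_smul]
    rw [← hcl]
  have h2 : ∀ i, ‖l i • ((i : S) - T (c l))‖ ≤ l i * ε := by
    intro i
    rw [norm_smul, Real.norm_of_nonneg (hl0 i)]
    by_cases h : ‖T (c l) - i‖ ≤ ε
    · rw [norm_sub_rev]; exact mul_le_mul_of_nonneg_left h (hl0 i)
    · have : l i = 0 := by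
        have e : φ i l / Φ l = l i := congrArg (fun z : EuclideanSpace ℝ F => z i) hl
        rw [← e]
        have : φ i l = 0 := max_eq_right (by push Not at h; linarith)
        rw [this, zero_div]
      simp [this]
  rw [h1]
  refine (norm_sum_le _ _).trans ((Finset.sum_le_sum fun i _ => h2 i).trans ?_)
  rw [← Finset.sum_mul, hl1, one_mul]

theorem bk_schauder {S : Type*} [NormedAddCommGroup S] [NormedSpace ℝ S]
    (M : Set S) (hne : M.Nonempty) (hclosed : IsClosed M) (hconv : Convex ℝ M) (T : S → S)
    (hT : ContinuousOn T M)
    (hTM : MapsTo T M M) (K : Set S) (hK : IsCompact K) (hTK : T '' M ⊆ K) :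
    ∃ x ∈ M, T x = x := by
  have h := fun n : ℕ => bk_schauder_approx M hne hconv T hT hTM K hK hTK (1 / ((n:ℝ) + 1))
    (by positivity)
  choose x hxM hx using h
  obtain ⟨z, hz, ψ, hψ, hlim⟩ := hK.tendsto_subseq (fun n => hTK (mem_image_of_mem T (hxM n)))
  have hdiff : Tendsto (fun n => x n - T (x n)) atTop (𝓝 0) :=
    squeeze_zero_norm hx tendsto_one_div_add_atTop_nhds_zero_nat
  have hxl : Tendsto (fun n => x (ψ n)) atTop (𝓝 z) := by
    have := (hdiff.comp hψ.tendsto_atTop).add hlim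
    simpa [Function.comp_def] using this
  have hzM : z ∈ M := hclosed.mem_of_tendsto hxl (Eventually.of_forall fun n => hxM _)
  refine ⟨z, hzM, ?_⟩
  have h2 : Tendsto (fun n => T (x (ψ n))) atTop (𝓝 (T z)) :=
    (hT z hzM).tendsto.comp (tendsto_nhdsWithin_iff.2 ⟨hxl, Eventually.of_forall fun n => hxM _⟩)
  exact tendsto_nhds_unique h2 hlim

/-- Burton's variant of Krasnosel'skii's fixed point theorem (Theorem 1.4): if
`M` is a nonempty closed convex subset of a Banach space `S`, `B` is a
contraction on `S` with constant `α < 1`, `A` is continuous on `M` with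
`A(M)` contained in a compact set, and `x = B x + A y` with `y ∈ M` implies
`x ∈ M`, then there is `y ∈ M` with `A y + B y = y`. -/
theorem burton_fixed_point
    (S : Type*) [NormedAddCommGroup S] [NormedSpace ℝ S] [CompleteSpace S]
    (M : Set S) (hne : M.Nonempty) (hclosed : IsClosed M) (hconv : Convex ℝ M)
    (A B : S → S)
    (α : ℝ) (hα : α < 1)
    (hB : ∀ x y : S, ‖B x - B y‖ ≤ α * ‖x - y‖)
    (hAcont : ContinuousOn A M)
    (hAcomp : ∃ K : Set S, IsCompact K ∧ A '' M ⊆ K)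
    (himp : ∀ x : S, ∀ y ∈ M, x = B x + A y → x ∈ M) :
    ∃ y ∈ M, A y + B y = y := by
  obtain ⟨K, hK, hAK⟩ := hAcomp
  let β : NNReal := ⟨max α 0, le_max_right _ _⟩
  have hβ : max α 0 < 1 := max_lt hα one_pos
  have hB' : ∀ x y : S, ‖B x - B y‖ ≤ max α 0 * ‖x - y‖ := fun x y =>
    (hB x y).trans (mul_le_mul_of_nonneg_right (le_max_left _ _) (norm_nonneg _))
  have hex : ∀ w : S, ∃ x, x = B x + w := by
    intro w
    have hc : ContractingWith β (fun x => B x + w) := by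
      refine ⟨by exact_mod_cast hβ, LipschitzWith.of_dist_le_mul fun a b => ?_⟩
      rw [dist_eq_norm, dist_eq_norm, add_sub_add_right_eq_sub]
      exact hB' a b
    exact ⟨_, hc.fixedPoint_isFixedPt.symm⟩
  choose R hR using hex
  have hRl : ∀ v w, ‖R v - R w‖ ≤ (1 - max α 0)⁻¹ * ‖v - w‖ := by
    intro v w
    have h1 : ‖R v - R w‖ ≤ ‖B (R v) - B (R w)‖ + ‖v - w‖ := by
      conv_lhs => rw [hR v, hR w, add_sub_add_comm]
      exact norm_add_le _ _
    have h2 := hB' (R v) (R w)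
    rw [inv_mul_eq_div, le_div_iff₀ (by linarith)]
    linarith
  have hRc : Continuous R := by
    refine (LipschitzWith.of_dist_le_mul (K := ⟨(1 - max α 0)⁻¹, inv_nonneg.2 (by linarith)⟩)
      fun a b => ?_).continuous
    rw [dist_eq_norm, dist_eq_norm]
    exact hRl a b
  obtain ⟨y, hy, hfy⟩ := bk_schauder M hne hclosed hconv (fun y => R (A y))
    (hRc.comp_continuousOn hAcont) (fun y hy => himp _ y hy (hR _)) (R '' K) (hK.image hRc)
    (by rintro _ ⟨y, hy, rfl⟩; exact mem_image_of_mem R (hAK (mem_image_of_mem A hy)))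
  refine ⟨y, hy, ?_⟩
  have := hR (A y)
  have hfy' : R (A y) = y := hfy
  rw [hfy'] at this
  rw [add_comm]; exact this.symm
end
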